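/- arXiv:2604.13147 — 3 statements merged into one kernel-verified Lean document; each statement's English description precedes it below -/
import Mathlib

section
/- For every n ≥ 2, both integrals ∫_0^{T_n} ∂_s K_{H,1}(T_n,s)·(A(T_n) − A(s⁺)) ds and ∫_0^{T_n} ∂_s K_{H,2}(T_n,s)·A(s) ds are well defined (the integrands are Lebesgue integrable on (0,T_n)), and ∫_0^{T_n} ∂_s K_{H,1}(T_n,s)·(A(T_n) − A(s⁺)) ds − ∫_0^{T_n} ∂_s K_{H,2}(T_n,s)·A(s) ds = Σ_{j=2}^{n} ΔA_j·K_{H,1}(T_n,T_{j−1}) + Σ_{j=1}^{n−1} ΔA_j·K_{H,2}(T_n,T_j). -/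
open MeasureTheory

/-- The fractional Brownian kernel `K_{H,1}(t,s) = c_H t^{H−1/2} s^{1/2−H} (t−s)^{H−1/2}`
(with the convention `K_{H,1}(t,0) = 0`, automatic here since `1/2 − H > 0`). -/
noncomputable def fbmK1 (cH H t s : ℝ) : ℝ :=
  cH * t ^ (H - 1 / 2 : ℝ) * s ^ (1 / 2 - H : ℝ) * (t - s) ^ (H - 1 / 2 : ℝ)

/-- The fractional Brownian kernel
`K_{H,2}(t,s) = c_H (1/2−H) s^{1/2−H} ∫_s^t u^{H−3/2} (u−s)^{H−1/2} du`
(with the convention `K_{H,2}(t,t) = 0`, automatic here). -/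
noncomputable def fbmK2 (cH H t s : ℝ) : ℝ :=
  cH * (1 / 2 - H) * s ^ (1 / 2 - H : ℝ) *
    ∫ u in s..t, u ^ (H - 3 / 2 : ℝ) * (u - s) ^ (H - 1 / 2 : ℝ)

open Set

/-! Both kernels are absolutely continuous in `s` away from one end of `[0, t]`: `K_{H,1}(t, ·)` on
`[0, q]` for `q < t`, and `K_{H,2}(t, ·)` on `[p, t]` for `p > 0`. The step functions
`A(T_n) - A(s⁺)` and `A(s)` vanish on the last, respectively the first, cell of the grid, which is
the only one where absolute continuity is not available, so each integral is a finite sum of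
increments `∫ ∂_s K = ΔK`, and summation by parts moves the differences from the kernel to `A`.

For `K_{H,2}` the singularity `(u - s)^{H-1/2}` moves with `s`; the reciprocal substitution
`u = s t / w` maps `[s, t]` to itself and gives
`K_{H,2}(t, s) = c_H (1/2 - H) t^{H-1/2} s^{H-1/2} ∫_s^t w^{-2H} (t - w)^{H-1/2} dw`, where `s`
enters only through the limit of integration and a power. -/

section AbsolutelyContinuous

variable {a b : ℝ}

theorem absolutelyContinuousOnInterval_congr {X : Type*} [PseudoMetricSpace X] {f g : ℝ → X}
    (hf : AbsolutelyContinuousOnInterval f a b) (hfg : EqOn f g (uIcc a b)) :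
    AbsolutelyContinuousOnInterval g a b := by
  refine Filter.Tendsto.congr' (Filter.eventually_inf_principal.2 (.of_forall fun E hE => ?_)) hf
  refine Finset.sum_congr rfl fun i hi => ?_
  rw [hfg (hE.1 i hi).1, hfg (hE.1 i hi).2]

theorem absolutelyContinuousOnInterval_rpow_of_pos {r : ℝ} (hr : 0 < r) (a b : ℝ) :
    AbsolutelyContinuousOnInterval (fun x : ℝ => x ^ r) a b := by
  have hprim : AbsolutelyContinuousOnInterval (fun x => ∫ v in a..x, v ^ (r - 1)) a b :=
    (intervalIntegral.intervalIntegrable_rpow' (by linarith)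
      ).absolutelyContinuousOnInterval_intervalIntegral left_mem_uIcc
  have hconst : AbsolutelyContinuousOnInterval (fun _ => a ^ r) a b :=
    contDiffOn_const.absolutelyContinuousOnInterval
  refine absolutelyContinuousOnInterval_congr (hconst.add (hprim.const_mul r)) fun x _ => ?_
  simp only [Pi.add_apply]
  rw [integral_rpow (Or.inl (by linarith)), sub_add_cancel, mul_div_cancel₀ _ hr.ne',
    add_sub_cancel]

theorem absolutelyContinuousOnInterval_rpow_of_zero_notMem (r : ℝ) (h : (0 : ℝ) ∉ uIcc a b) :
    AbsolutelyContinuousOnInterval (fun x : ℝ => x ^ r) a b :=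
  (contDiffOn_id.rpow_const_of_ne fun _ hx => ne_of_mem_of_not_mem hx h
    ).absolutelyContinuousOnInterval

theorem absolutelyContinuousOnInterval_const_sub_rpow (r : ℝ) {t : ℝ} (h : t ∉ uIcc a b) :
    AbsolutelyContinuousOnInterval (fun x : ℝ => (t - x) ^ r) a b :=
  ((contDiffOn_const.sub contDiffOn_id).rpow_const_of_ne fun _ hx =>
    sub_ne_zero.2 (ne_of_mem_of_not_mem hx h).symm).absolutelyContinuousOnInterval

end AbsolutelyContinuous

section ReciprocalSubstitution

theorem intervalIntegral_comp_mul_div {E : Type*} [NormedAddCommGroup E] [NormedSpace ℝ E]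
    (g : ℝ → E) {s t : ℝ} (hs : 0 < s) (ht : 0 < t) :
    ∫ w in s..t, (s * t / w ^ 2) • g (s * t / w) = ∫ u in s..t, g u := by
  have hpos : ∀ w ∈ uIcc s t, 0 < w := fun w hw => (lt_min hs ht).trans_le hw.1
  have hsub := intervalIntegral.integral_deriv_smul_comp_of_deriv_nonpos (g := g)
    (f := fun w => s * t / w) (f' := fun w => -(s * t / w ^ 2)) (a := s) (b := t)
    (continuousOn_const.div continuousOn_id fun w hw => (hpos w hw).ne')
    (fun w hw => by
      simpa [neg_div] using
        (hasDerivAt_const w (s * t)).fun_div (hasDerivAt_id w)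
          (hpos w (Ioo_subset_Icc_self hw)).ne')
    (fun w _ => neg_nonpos.2 (by positivity))
  simp only [neg_smul, intervalIntegral.integral_neg, Function.comp_def,
    mul_div_cancel_left₀ t hs.ne', mul_div_cancel_right₀ s ht.ne'] at hsub
  rw [intervalIntegral.integral_symm s t, neg_inj] at hsub
  exact hsub

theorem intervalIntegral_rpow_mul_sub_rpow (p q : ℝ) {s t : ℝ} (hs : 0 < s) (hst : s ≤ t) :
    ∫ u in s..t, u ^ p * (u - s) ^ q =
      s ^ (p + q + 1) * t ^ (p + 1) * ∫ w in s..t, w ^ (-(p + q + 2)) * (t - w) ^ q := by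
  rw [← intervalIntegral_comp_mul_div _ hs (hs.trans_le hst), ← intervalIntegral.integral_const_mul]
  refine intervalIntegral.integral_congr fun w hw => ?_
  rw [uIcc_of_le hst] at hw
  have hw0 : 0 < w := hs.trans_le hw.1
  have ht0 : 0 < t := hs.trans_le hst
  have htw : 0 ≤ t - w := sub_nonneg.2 hw.2
  have hdiff : s * t / w - s = s * (t - w) / w := by field_simp
  simp only [smul_eq_mul]
  rw [hdiff, Real.div_rpow (by positivity) hw0.le, Real.div_rpow (by positivity) hw0.le,
    Real.mul_rpow hs.le ht0.le, Real.mul_rpow hs.le htw, Real.rpow_neg hw0.le,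
    Real.rpow_add hs, Real.rpow_add hs, Real.rpow_add ht0, Real.rpow_add hw0, Real.rpow_add hw0]
  simp only [Real.rpow_one, Real.rpow_ofNat]
  field_simp

end ReciprocalSubstitution

section Kernels

variable {H p q s t : ℝ}

theorem absolutelyContinuousOnInterval_fbmK1 (cH : ℝ) (hH : H < 1 / 2) (h : t ∉ uIcc p q) :
    AbsolutelyContinuousOnInterval (fbmK1 cH H t) p q :=
  ((absolutelyContinuousOnInterval_rpow_of_pos (sub_pos.2 hH) p q).const_mul _).fun_mul
    (absolutelyContinuousOnInterval_const_sub_rpow _ h)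

theorem fbmK1_zero (cH t : ℝ) (hH : H ≠ 1 / 2) : fbmK1 cH H t 0 = 0 := by
  rw [fbmK1, Real.zero_rpow (sub_ne_zero.2 hH.symm), mul_zero, zero_mul]

theorem fbmK2_self (cH H t : ℝ) : fbmK2 cH H t t = 0 := by
  simp [fbmK2]

theorem fbmK2_eq_reciprocal (cH H : ℝ) (hs : 0 < s) (hst : s ≤ t) :
    fbmK2 cH H t s = cH * (1 / 2 - H) * t ^ (H - 1 / 2) *
      (s ^ (H - 1 / 2) * ∫ w in s..t, w ^ (-2 * H) * (t - w) ^ (H - 1 / 2)) := by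
  have hpow : s ^ (H - 1 / 2) = s ^ (1 / 2 - H) * s ^ (2 * H - 1) := by
    rw [← Real.rpow_add hs]
    ring_nf
  rw [fbmK2, intervalIntegral_rpow_mul_sub_rpow _ _ hs hst, hpow]
  ring_nf

theorem intervalIntegrable_rpow_mul_sub_rpow (r : ℝ) (hq : -1 < q) (h : (0 : ℝ) ∉ uIcc s t) :
    IntervalIntegrable (fun w => w ^ r * (t - w) ^ q) volume s t := by
  have hsing : IntervalIntegrable (fun w => (t - w) ^ q) volume s t := by
    simpa using (intervalIntegral.intervalIntegrable_rpow' (a := t - s) (b := 0) hq).comp_sub_left t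
  exact hsing.continuousOn_mul
    (continuousOn_id.rpow_const fun _ hw => Or.inl (ne_of_mem_of_not_mem hw h))

theorem absolutelyContinuousOnInterval_fbmK2 (cH : ℝ) (hH : -1 / 2 < H) (hp : 0 < p) (hpq : p ≤ q)
    (hqt : q ≤ t) : AbsolutelyContinuousOnInterval (fbmK2 cH H t) p q := by
  have hpt : p ≤ t := hpq.trans hqt
  have h0 : (0 : ℝ) ∉ uIcc p t := notMem_uIcc_of_lt hp (hp.trans_le hpt)
  have hprim : AbsolutelyContinuousOnInterval
      (fun s => ∫ w in t..s, w ^ (-2 * H) * (t - w) ^ (H - 1 / 2)) p t :=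
    (intervalIntegrable_rpow_mul_sub_rpow _ (by linarith) h0
      ).absolutelyContinuousOnInterval_intervalIntegral right_mem_uIcc
  have hprod := ((absolutelyContinuousOnInterval_rpow_of_zero_notMem (H - 1 / 2) h0).fun_mul
    hprim.fun_neg).const_mul (cH * (1 / 2 - H) * t ^ (H - 1 / 2))
  refine absolutelyContinuousOnInterval_congr
    (hprod.mono (uIcc_subset_uIcc_left ⟨by simp [hpq], by simp [hqt]⟩)) fun s hs => ?_
  rw [uIcc_of_le hpq] at hs
  rw [fbmK2_eq_reciprocal cH H (hp.trans_le hs.1) (hs.2.trans hqt),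
    intervalIntegral.integral_symm t s]

variable {n i : ℕ} {T : ℕ → ℝ}

theorem absolutelyContinuousOnInterval_fbmK1_cell (cH : ℝ) (hH : H < 1 / 2)
    (hT : StrictMonoOn T (Iic n)) (hi : i + 1 < n) :
    AbsolutelyContinuousOnInterval (fbmK1 cH H (T n)) (T i) (T (i + 1)) :=
  absolutelyContinuousOnInterval_fbmK1 cH hH <|
    notMem_uIcc_of_gt (hT (i.le_succ.trans hi.le) self_mem_Iic (i.lt_succ_self.trans hi))
      (hT hi.le self_mem_Iic hi)

theorem absolutelyContinuousOnInterval_fbmK2_cell (cH : ℝ) (hH : -1 / 2 < H)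
    (hT : StrictMonoOn T (Iic n)) (hT0 : 0 ≤ T 0) (hi0 : 0 < i) (hi : i < n) :
    AbsolutelyContinuousOnInterval (fbmK2 cH H (T n)) (T i) (T (i + 1)) :=
  absolutelyContinuousOnInterval_fbmK2 cH hH (hT0.trans_lt (hT n.zero_le hi.le hi0))
    (hT.monotoneOn hi.le hi i.le_succ) (hT.monotoneOn hi self_mem_Iic hi)

end Kernels

section StepFunctions

variable {F g : ℝ → ℝ} {p q c : ℝ}

theorem intervalIntegrable_deriv_mul_of_eqOn_const (hpq : p ≤ q)
    (hF : c ≠ 0 → AbsolutelyContinuousOnInterval F p q) (hg : EqOn g (fun _ => c) (Ioo p q)) :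
    IntervalIntegrable (fun s => deriv F s * g s) volume p q := by
  have hconst : IntervalIntegrable (fun s => deriv F s * c) volume p q := by
    rcases eq_or_ne c 0 with rfl | hc
    · simp
    · exact (hF hc).intervalIntegrable_deriv.mul_const c
  rw [← uIoo_of_le hpq] at hg
  exact hconst.congr_uIoo fun s hs => by simp only [hg hs]

theorem integral_deriv_mul_of_eqOn_const (hpq : p ≤ q)
    (hF : c ≠ 0 → AbsolutelyContinuousOnInterval F p q) (hg : EqOn g (fun _ => c) (Ioo p q)) :
    ∫ s in p..q, deriv F s * g s = c * (F q - F p) := by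
  calc ∫ s in p..q, deriv F s * g s
      = ∫ s in p..q, deriv F s * c :=
        intervalIntegral.integral_congr_Ioo_of_le hpq fun s hs => by simp only [hg hs]
    _ = c * ∫ s in p..q, deriv F s := by rw [intervalIntegral.integral_mul_const, mul_comm]
    _ = c * (F q - F p) := by
        rcases eq_or_ne c 0 with rfl | hc
        · simp
        · rw [(hF hc).integral_deriv_eq_sub]

variable {n : ℕ} {T b : ℕ → ℝ}

theorem integrableOn_deriv_mul_step (hT : MonotoneOn T (Iic n))
    (hF : ∀ i < n, b i ≠ 0 → AbsolutelyContinuousOnInterval F (T i) (T (i + 1)))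
    (hg : ∀ i < n, EqOn g (fun _ => b i) (Ioo (T i) (T (i + 1)))) :
    IntegrableOn (fun s => deriv F s * g s) (Ioo (T 0) (T n)) := by
  have h0n : T 0 ≤ T n := hT n.zero_le self_mem_Iic n.zero_le
  rw [← integrableOn_Ioc_iff_integrableOn_Ioo, ← intervalIntegrable_iff_integrableOn_Ioc_of_le h0n]
  exact .trans_iterate fun i hi =>
    intervalIntegrable_deriv_mul_of_eqOn_const (hT hi.le hi i.le_succ) (hF i hi) (hg i hi)

theorem setIntegral_deriv_mul_step (hT : MonotoneOn T (Iic n))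
    (hF : ∀ i < n, b i ≠ 0 → AbsolutelyContinuousOnInterval F (T i) (T (i + 1)))
    (hg : ∀ i < n, EqOn g (fun _ => b i) (Ioo (T i) (T (i + 1)))) :
    ∫ s in Ioo (T 0) (T n), deriv F s * g s =
      ∑ i ∈ Finset.range n, b i * (F (T (i + 1)) - F (T i)) := by
  have hcell : ∀ i < n, T i ≤ T (i + 1) := fun i hi => hT hi.le hi i.le_succ
  rw [← integral_Ioc_eq_integral_Ioo,
    ← intervalIntegral.integral_of_le (hT n.zero_le self_mem_Iic n.zero_le),
    ← intervalIntegral.sum_integral_adjacent_intervals fun i hi =>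
      intervalIntegrable_deriv_mul_of_eqOn_const (hcell i hi) (hF i hi) (hg i hi)]
  refine Finset.sum_congr rfl fun i hi => ?_
  rw [Finset.mem_range] at hi
  exact integral_deriv_mul_of_eqOn_const (hcell i hi) (hF i hi) (hg i hi)

end StepFunctions

section SummationByParts

variable {R : Type*} [Ring R]

theorem sum_range_tail_mul_sub (a : ℕ → R) {f : ℕ → R} (hf : f 0 = 0) (n : ℕ) :
    ∑ i ∈ Finset.range n, (a n - a (i + 1)) * (f (i + 1) - f i) =
      ∑ j ∈ Finset.Icc 2 n, (a j - a (j - 1)) * f (j - 1) := by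
  have htelescope := Finset.sum_range_sub (fun i => (a n - a i) * f i) n
  have hparts : ∑ i ∈ Finset.range n, (a n - a (i + 1)) * (f (i + 1) - f i) =
      ∑ i ∈ Finset.range n, (a (i + 1) - a i) * f i := by
    rw [← sub_eq_zero, ← Finset.sum_sub_distrib]
    simp only [sub_self, zero_mul, hf, mul_zero] at htelescope
    rw [← htelescope]
    exact Finset.sum_congr rfl fun i _ => by noncomm_ring
  rw [hparts]
  cases n with
  | zero => simp
  | succ m =>
    rw [Finset.sum_range_succ', hf, mul_zero, add_zero, ← Finset.Ico_add_one_right_eq_Icc,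
      Finset.sum_Ico_eq_sum_range]
    exact Finset.sum_congr (by simp) fun i _ => by simp [add_comm 2 i]

theorem sum_range_mul_sub {a f : ℕ → R} (ha : a 0 = 0) {n : ℕ} (hf : f n = 0) :
    ∑ i ∈ Finset.range n, a i * (f (i + 1) - f i) =
      -∑ j ∈ Finset.Icc 1 (n - 1), (a j - a (j - 1)) * f j := by
  have htelescope := Finset.sum_range_sub (fun i => a i * f i) n
  have hparts : ∑ i ∈ Finset.range n, a i * (f (i + 1) - f i) =
      -∑ i ∈ Finset.range n, (a (i + 1) - a i) * f (i + 1) := by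
    rw [← add_eq_zero_iff_eq_neg, ← Finset.sum_add_distrib]
    simp only [hf, ha, mul_zero, zero_mul, sub_self] at htelescope
    rw [← htelescope]
    exact Finset.sum_congr rfl fun i _ => by noncomm_ring
  rw [hparts]
  cases n with
  | zero => simp
  | succ m =>
    rw [Finset.sum_range_succ, hf, mul_zero, add_zero, Nat.add_sub_cancel,
      ← Finset.Ico_add_one_right_eq_Icc, Finset.sum_Ico_eq_sum_range]
    simp [add_comm 1]

end SummationByParts

theorem stmt_1_general
    (H cH : ℝ) (hH : H ∈ Ioo (-1 / 2 : ℝ) (1 / 2)) (n : ℕ)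
    (T : ℕ → ℝ) (hT0 : T 0 = 0) (hTmono : ∀ i < n, T i < T (i + 1))
    (a : ℕ → ℝ) (ha0 : a 0 = 0)
    (A : ℝ → ℝ)
    (hA : ∀ j ∈ Finset.Icc 1 n, ∀ s ∈ Ico (T (j - 1)) (T j), A s = a (j - 1))
    (hAT : A (T n) = a n)
    (Aplus : ℝ → ℝ)
    (hAplus : ∀ j ∈ Finset.Icc 1 n, ∀ s ∈ Ico (T (j - 1)) (T j), Aplus s = a j) :
    IntegrableOn (fun s => deriv (fbmK1 cH H (T n)) s * (A (T n) - Aplus s)) (Ioo 0 (T n)) ∧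
    IntegrableOn (fun s => deriv (fbmK2 cH H (T n)) s * A s) (Ioo 0 (T n)) ∧
    (∫ s in Ioo 0 (T n), deriv (fbmK1 cH H (T n)) s * (A (T n) - Aplus s))
      - (∫ s in Ioo 0 (T n), deriv (fbmK2 cH H (T n)) s * A s)
      = (∑ j ∈ Finset.Icc 2 n, (a j - a (j - 1)) * fbmK1 cH H (T n) (T (j - 1)))
        + ∑ j ∈ Finset.Icc 1 (n - 1), (a j - a (j - 1)) * fbmK2 cH H (T n) (T j) := by
  have hT : StrictMonoOn T (Iic n) :=
    strictMonoOn_of_lt_add_one ordConnected_Iic fun i _ _ hi => hTmono i hi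
  have hj : ∀ i < n, i + 1 ∈ Finset.Icc 1 n := fun i hi => Finset.mem_Icc.2 ⟨by omega, hi⟩
  have hg₁ : ∀ i < n, EqOn (fun s => A (T n) - Aplus s) (fun _ => a n - a (i + 1))
      (Ioo (T i) (T (i + 1))) := fun i hi s hs => by
    simp only [hAT, hAplus (i + 1) (hj i hi) s (Ioo_subset_Ico_self hs)]
  have hg₂ : ∀ i < n, EqOn A (fun _ => a i) (Ioo (T i) (T (i + 1))) := fun i hi s hs =>
    hA (i + 1) (hj i hi) s (Ioo_subset_Ico_self hs)
  have hK₁ : ∀ i < n, a n - a (i + 1) ≠ 0 →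
      AbsolutelyContinuousOnInterval (fbmK1 cH H (T n)) (T i) (T (i + 1)) := fun i hi hne =>
    absolutelyContinuousOnInterval_fbmK1_cell cH hH.2 hT <|
      lt_of_le_of_ne hi fun h => hne (by rw [h, sub_self])
  have hK₂ : ∀ i < n, a i ≠ 0 →
      AbsolutelyContinuousOnInterval (fbmK2 cH H (T n)) (T i) (T (i + 1)) := fun i hi hne =>
    absolutelyContinuousOnInterval_fbmK2_cell cH hH.1 hT hT0.ge
      (Nat.pos_of_ne_zero fun h => hne (h ▸ ha0)) hi
  rw [← hT0]
  refine ⟨integrableOn_deriv_mul_step hT.monotoneOn hK₁ hg₁,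
    integrableOn_deriv_mul_step hT.monotoneOn hK₂ hg₂, ?_⟩
  rw [setIntegral_deriv_mul_step hT.monotoneOn hK₁ hg₁,
    setIntegral_deriv_mul_step hT.monotoneOn hK₂ hg₂,
    sum_range_tail_mul_sub a (f := fun i => fbmK1 cH H (T n) (T i))
      (by rw [hT0, fbmK1_zero cH (T n) hH.2.ne]),
    sum_range_mul_sub (f := fun i => fbmK2 cH H (T n) (T i)) ha0 (fbmK2_self cH H (T n)),
    sub_neg_eq_add]

/-- Lemma `repWH` of the paper: for the càdlàg step function `A` built on the grid
`0 = T₀ < ... < T_n` with values `a₀ = 0, a₁, ..., a_n`, both integrands are Lebesgue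
integrable on `(0,T_n)` and
`∫_0^{T_n} ∂_s K_{H,1}(T_n,s)(A(T_n) − A(s⁺)) ds − ∫_0^{T_n} ∂_s K_{H,2}(T_n,s) A(s) ds
  = Σ_{j=2}^n ΔA_j K_{H,1}(T_n,T_{j−1}) + Σ_{j=1}^{n−1} ΔA_j K_{H,2}(T_n,T_j)`. -/
theorem stmt_1
    (H cH : ℝ) (hH : H ∈ Set.Ioo (0 : ℝ) (1 / 2)) (hcH : 0 < cH)
    (n : ℕ) (hn : 2 ≤ n)
    (T : ℕ → ℝ) (hT0 : T 0 = 0) (hTmono : ∀ i < n, T i < T (i + 1))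
    (a : ℕ → ℝ) (ha0 : a 0 = 0)
    (A : ℝ → ℝ)
    (hA : ∀ j ∈ Finset.Icc 1 n, ∀ s ∈ Set.Ico (T (j - 1)) (T j), A s = a (j - 1))
    (hAT : A (T n) = a n)
    (Aplus : ℝ → ℝ)
    (hAplus : ∀ j ∈ Finset.Icc 1 n, ∀ s ∈ Set.Ico (T (j - 1)) (T j), Aplus s = a j) :
    IntegrableOn
      (fun s => deriv (fun s' => fbmK1 cH H (T n) s') s * (A (T n) - Aplus s))
      (Set.Ioo 0 (T n)) ∧
    IntegrableOn
      (fun s => deriv (fun s' => fbmK2 cH H (T n) s') s * A s)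
      (Set.Ioo 0 (T n)) ∧
    (∫ s in Set.Ioo 0 (T n), deriv (fun s' => fbmK1 cH H (T n) s') s * (A (T n) - Aplus s))
      - (∫ s in Set.Ioo 0 (T n), deriv (fun s' => fbmK2 cH H (T n) s') s * A s)
      = (∑ j ∈ Finset.Icc 2 n, (a j - a (j - 1)) * fbmK1 cH H (T n) (T (j - 1)))
        + ∑ j ∈ Finset.Icc 1 (n - 1), (a j - a (j - 1)) * fbmK2 cH H (T n) (T j) := by
  exact stmt_1_general H cH ⟨by linarith [hH.1], hH.2⟩ n T hT0 hTmono a ha0 A hA hAT Aplus hAplus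
end

section
/- Let λ be a probability measure on 𝔸 absolutely continuous with respect to Lebesgue measure, μ_K a probability measure on ℝ supported in K and absolutely continuous with respect to Lebesgue measure, G : 𝔸 × K → (0,∞) measurable with inf G > 0 and ∫ G d(λ ⊗ μ_K) = 1, and set β := G·(λ ⊗ μ_K) and ξ := Z_# β. Let r̄ : ℝ → [0,∞) be measurable with ∫ r̄ dμ_K = 1, let h : 𝔸 → [0,∞) be measurable with ∫ h dλ = 1, and define the mixture m := Z_#( (h(a)·r̄(z))·(λ ⊗ μ_K) ). Then m is absolutely continuous with respect to ξ, and for ξ-almost every x = (x₁,x₂) one has dm/dξ(x) = h(x₂/x₁)·r̄(x₁) / G(x₂/x₁, x₁). -/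
open MeasureTheory

/-- The cone map `Z(a,z) = (z, a·z)` (first coordinate the "increment", second the action
times the increment), as a map `ℝ × ℝ → ℝ × ℝ` on pairs `(a,z)`. -/
def coneMap : ℝ × ℝ → ℝ × ℝ := fun p => (p.2, p.1 * p.2)

/-- The reference training law `ξ = Z_#(G·(λ ⊗ μ_K))` on the cone. -/
noncomputable def coneRefMeas (lam μK : Measure ℝ) (G : ℝ × ℝ → ℝ) : Measure (ℝ × ℝ) :=
  Measure.map coneMap ((lam.prod μK).withDensity fun p => ENNReal.ofReal (G p))

/-- The mixture law `m = Z_#((h(a)·r̄(z))·(λ ⊗ μ_K))` on the cone. -/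
noncomputable def coneMixMeas (lam μK : Measure ℝ) (h rbar : ℝ → ℝ) : Measure (ℝ × ℝ) :=
  Measure.map coneMap
    ((lam.prod μK).withDensity fun p => ENNReal.ofReal (h p.1 * rbar p.2))

/-!
Off `z = 0` the cone map is inverted by `x ↦ (x₂/x₁, x₁)`, and `μ_K` does not charge `0`.
Pushing forward along a map that is a.e. invertible transports densities and Radon–Nikodym
derivatives by composition with the inverse; upstairs, the mixture has density `h·r̄/G` with
respect to `G·(λ ⊗ μ_K)`.
-/

section AELeftInverse

variable {α β : Type*} [MeasurableSpace α] [MeasurableSpace β] {μ : Measure α} {f : α → β}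
  {g : β → α}

theorem sigmaFinite_map_of_ae_leftInverse [SigmaFinite μ] (hf : Measurable f) (hg : Measurable g)
    (hgf : ∀ᵐ a ∂μ, g (f a) = a) : SigmaFinite (μ.map f) := by
  have map_map_eq : (μ.map f).map g = μ := by
    rw [Measure.map_map hg hf, Measure.map_congr (f := g ∘ f) (g := id) hgf, Measure.map_id]
  exact SigmaFinite.of_map _ hg.aemeasurable (map_map_eq.symm ▸ inferInstance)

theorem map_withDensity_comp (μ : Measure α) (hf : Measurable f) {φ : β → ENNReal}
    (hφ : Measurable φ) : (μ.withDensity (φ ∘ f)).map f = (μ.map f).withDensity φ := by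
  ext s hs
  rw [Measure.map_apply hf hs, withDensity_apply _ (hf hs), withDensity_apply _ hs,
    setLIntegral_map hs hφ hf]
  rfl

theorem map_withDensity_of_ae_leftInverse (hf : Measurable f) (hg : Measurable g)
    (hgf : ∀ᵐ a ∂μ, g (f a) = a) {φ : α → ENNReal} (hφ : Measurable φ) :
    (μ.withDensity φ).map f = (μ.map f).withDensity (φ ∘ g) := by
  have density_eq : φ =ᵐ[μ] (φ ∘ g) ∘ f := hgf.mono fun a ha => congrArg φ ha.symm
  rw [withDensity_congr_ae density_eq, map_withDensity_comp μ hf (hφ.comp hg)]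

theorem rnDeriv_map_withDensity_of_ae_leftInverse [SigmaFinite μ] (hf : Measurable f)
    (hg : Measurable g) (hgf : ∀ᵐ a ∂μ, g (f a) = a) {φ : α → ENNReal} (hφ : Measurable φ) :
    ((μ.withDensity φ).map f).rnDeriv (μ.map f) =ᵐ[μ.map f] φ ∘ g := by
  have := sigmaFinite_map_of_ae_leftInverse hf hg hgf
  rw [map_withDensity_of_ae_leftInverse hf hg hgf hφ]
  exact Measure.rnDeriv_withDensity _ (hφ.comp hg)

end AELeftInverse

theorem withDensity_ofReal_withDensity_ofReal_div {α : Type*} [MeasurableSpace α] {μ : Measure α}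
    {u v : α → ℝ} (hu : Measurable u) (hv : Measurable v) (hv_pos : ∀ᵐ a ∂μ, 0 < v a) :
    (μ.withDensity fun a => ENNReal.ofReal (v a)).withDensity
        (fun a => ENNReal.ofReal (u a / v a)) =
      μ.withDensity fun a => ENNReal.ofReal (u a) := by
  rw [← withDensity_mul _ (by fun_prop) (by fun_prop)]
  refine withDensity_congr_ae (hv_pos.mono fun a ha => ?_)
  rw [Pi.mul_apply, ← ENNReal.ofReal_mul ha.le, mul_div_cancel₀ _ ha.ne']

theorem ae_prod_mem_of_measure_compl_eq_zero {α β : Type*} [MeasurableSpace α] [MeasurableSpace β]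
    {μ : Measure α} {ν : Measure β} {s : Set α} {t : Set β} (hs : μ sᶜ = 0)
    (ht : ν tᶜ = 0) : ∀ᵐ p ∂μ.prod ν, p.1 ∈ s ∧ p.2 ∈ t :=
  (Measure.quasiMeasurePreserving_fst.ae (mem_ae_iff.mpr hs)).and
    (Measure.quasiMeasurePreserving_snd.ae (mem_ae_iff.mpr ht))

/-- The inverse `(z, y) ↦ (y / z, z)` of the cone map away from `z = 0`; division by zero makes
it send `(0, y)` to `(0, 0)`. -/
noncomputable def coneInv (x : ℝ × ℝ) : ℝ × ℝ := (x.2 / x.1, x.1)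

theorem measurable_coneMap : Measurable coneMap :=
  measurable_snd.prodMk (measurable_fst.mul measurable_snd)

theorem measurable_coneInv : Measurable coneInv :=
  (measurable_snd.div measurable_fst).prodMk measurable_fst

theorem coneInv_coneMap {p : ℝ × ℝ} (hp : p.2 ≠ 0) : coneInv (coneMap p) = p :=
  Prod.ext (mul_div_cancel_right₀ p.1 hp) rfl

theorem stmt_5_general {lam μK : Measure ℝ} [SigmaFinite lam] [SigmaFinite μK]
    (hμK : ∀ᵐ z ∂μK, z ≠ 0) {G : ℝ × ℝ → ℝ} (hG : Measurable G)
    (hG_pos : ∀ᵐ p ∂lam.prod μK, 0 < G p) {rbar h : ℝ → ℝ} (hr : Measurable rbar)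
    (hh : Measurable h) :
    coneMixMeas lam μK h rbar ≪ coneRefMeas lam μK G ∧
    (coneMixMeas lam μK h rbar).rnDeriv (coneRefMeas lam μK G)
      =ᵐ[coneRefMeas lam μK G]
        fun x => ENNReal.ofReal (h (x.2 / x.1) * rbar x.1 / G (x.2 / x.1, x.1)) := by
  have leftInverse : ∀ᵐ p ∂(lam.prod μK).withDensity fun p => ENNReal.ofReal (G p),
      coneInv (coneMap p) = p :=
    (withDensity_absolutelyContinuous _ _).ae_le <|
      (Measure.quasiMeasurePreserving_snd.ae hμK).mono fun _ => coneInv_coneMap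
  have := SigmaFinite.withDensity_of_ne_top' (μ := lam.prod μK)
    (f := fun p => ENNReal.ofReal (G p)) fun _ => ENNReal.ofReal_ne_top
  have hhr : Measurable fun p : ℝ × ℝ => h p.1 * rbar p.2 := by fun_prop
  rw [coneMixMeas, coneRefMeas, ← withDensity_ofReal_withDensity_ofReal_div hhr hG hG_pos]
  exact ⟨(withDensity_absolutelyContinuous _ _).map measurable_coneMap,
    rnDeriv_map_withDensity_of_ae_leftInverse measurable_coneMap measurable_coneInv leftInverse
      (hhr.div hG).ennreal_ofReal⟩

/-- Proposition `completecase1` of the paper (abstract form): with `λ, μ_K` absolutely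
continuous probability measures supported in the compact sets `𝔸`, `K`, a disintegration
kernel `G` bounded below on `𝔸 × K` with `∫ G d(λ⊗μ_K) = 1`, and densities `r̄`, `h`
normalized w.r.t. `μ_K`, `λ`, the mixture `m := Z_#((h·r̄)·(λ⊗μ_K))` is absolutely
continuous w.r.t. `ξ := Z_#(G·(λ⊗μ_K))` with
`dm/dξ(x) = h(x₂/x₁)·r̄(x₁)/G(x₂/x₁,x₁)` for `ξ`-a.e. `x = (x₁,x₂)`. -/
theorem stmt_5
    (𝔸 K : Set ℝ) (h𝔸c : IsCompact 𝔸) (hKc : IsCompact K)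
    (lam μK : Measure ℝ) [IsProbabilityMeasure lam] [IsProbabilityMeasure μK]
    (hlamac : lam ≪ volume) (hμKac : μK ≪ volume)
    (hlamsupp : lam 𝔸ᶜ = 0) (hμKsupp : μK Kᶜ = 0)
    (G : ℝ × ℝ → ℝ) (hGmeas : Measurable G) (hGnn : ∀ p, 0 ≤ G p)
    (g0 : ℝ) (hg0 : 0 < g0) (hGlb : ∀ a ∈ 𝔸, ∀ z ∈ K, g0 ≤ G (a, z))
    (hGint : ∫ p, G p ∂(lam.prod μK) = 1)
    (rbar : ℝ → ℝ) (hrmeas : Measurable rbar) (hrnn : ∀ z, 0 ≤ rbar z)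
    (hrint : ∫ z, rbar z ∂μK = 1)
    (h : ℝ → ℝ) (hhmeas : Measurable h) (hhnn : ∀ a, 0 ≤ h a)
    (hhint : ∫ a, h a ∂lam = 1) :
    coneMixMeas lam μK h rbar ≪ coneRefMeas lam μK G ∧
    (coneMixMeas lam μK h rbar).rnDeriv (coneRefMeas lam μK G)
      =ᵐ[coneRefMeas lam μK G]
        fun x => ENNReal.ofReal (h (x.2 / x.1) * rbar x.1 / G (x.2 / x.1, x.1)) :=
  stmt_5_general (hμKac.ae_le (Measure.ae_ne volume 0)) hGmeas
    ((ae_prod_mem_of_measure_compl_eq_zero hlamsupp hμKsupp).mono fun p hp =>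
      hg0.trans_le (hGlb p.1 hp.1 p.2 hp.2)) hrmeas hhmeas
end

section
/- Define backward recursively, for each θ ∈ Θ, V_m^θ := V_m and V_j^θ(o) := inf_{a ∈ 𝔸} ∫_X ∫_{ℝ^q} V_{j+1}^θ( (o,(x,y)) )·r_{j+1}^θ(a,y,o) μ(dy) ν(dx) for j = m−1, ..., 0, and assume each V_j^θ is measurable. Then sup_{o ∈ H_j} |V_j^θ(o)| ≤ B for all j and θ, and for all θ, θ' ∈ Θ and all 0 ≤ j ≤ m, sup_{o ∈ H_j} |V_j^θ(o) − V_j^{θ'}(o)| ≤ (m−j)·B·L·|θ − θ'|. -/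
open MeasureTheory

/-!
Averaging against a probability density does not increase the sup norm, and neither does an
infimum, which gives the uniform bound by backward induction. For the Lipschitz estimate, write
`∫ f r - ∫ g s = ∫ (f - g) r + ∫ g (r - s)`: the first term is at most `sup |f - g|`, the second at
most `sup |g|` times the `L¹` distance of the densities. So one step backwards adds at most
`B ‖r - s‖₁` to the distance of the value functions, and these errors add up over the remaining
`m - j` steps.
-/

/-- `r` is a probability density with respect to `μ`. An integral equal to `1` forces `r` to be
integrable, so integrability is not a separate field. -/
structure IsProbDensity {Y : Type*} [MeasurableSpace Y] (μ : Measure Y) (r : Y → ℝ) : Prop where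
  nonneg : 0 ≤ᵐ[μ] r
  integral_eq_one : ∫ y, r y ∂μ = 1

namespace IsProbDensity

variable {X Y : Type*} [MeasurableSpace X] [MeasurableSpace Y] {μ : Measure Y}
  {r s f g : Y → ℝ} {C D : ℝ}

theorem integrable (hr : IsProbDensity μ r) : Integrable r μ :=
  .of_integral_ne_zero (by simp [hr.integral_eq_one])

theorem integrable_mul (hr : IsProbDensity μ r) (hf : AEStronglyMeasurable f μ)
    (hfC : ∀ y, |f y| ≤ C) : Integrable (fun y => f y * r y) μ :=
  hr.integrable.bdd_mul hf (.of_forall hfC)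

theorem abs_integral_mul_le (hr : IsProbDensity μ r) (hfC : ∀ y, |f y| ≤ C) :
    |∫ y, f y * r y ∂μ| ≤ C := by
  have h_abs_le : ∀ᵐ y ∂μ, ‖f y * r y‖ ≤ C * r y := by
    filter_upwards [hr.nonneg] with y hy
    rw [norm_mul, Real.norm_of_nonneg hy]
    exact mul_le_mul_of_nonneg_right (hfC y) hy
  calc |∫ y, f y * r y ∂μ| ≤ ∫ y, C * r y ∂μ :=
        norm_integral_le_of_norm_le (hr.integrable.const_mul C) h_abs_le
    _ = C := by rw [integral_const_mul, hr.integral_eq_one, mul_one]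

theorem abs_integral_mul_sub_integral_mul_le (hr : IsProbDensity μ r) (hs : IsProbDensity μ s)
    (hf : AEStronglyMeasurable f μ) (hg : AEStronglyMeasurable g μ)
    (hgC : ∀ y, |g y| ≤ C) (hfg : ∀ y, |f y - g y| ≤ D) :
    |∫ y, f y * r y ∂μ - ∫ y, g y * s y ∂μ| ≤ D + C * ∫ y, |r y - s y| ∂μ := by
  have h_split : ∫ y, f y * r y ∂μ - ∫ y, g y * s y ∂μ
      = ∫ y, (f y - g y) * r y ∂μ + ∫ y, g y * (r y - s y) ∂μ := by
    have hfgr : Integrable (fun y => (f y - g y) * r y) μ := hr.integrable_mul (hf.sub hg) hfg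
    have hgr := hr.integrable_mul hg hgC
    have hgs := hs.integrable_mul hg hgC
    have hfr : ∫ y, f y * r y ∂μ = ∫ y, (f y - g y) * r y ∂μ + ∫ y, g y * r y ∂μ := by
      rw [← integral_add hfgr hgr]
      simp only [sub_mul, sub_add_cancel]
    simp only [hfr, mul_sub, integral_sub hgr hgs, add_sub_assoc]
  have h_density : |∫ y, g y * (r y - s y) ∂μ| ≤ C * ∫ y, |r y - s y| ∂μ := by
    have hrs : Integrable (fun y => C * |r y - s y|) μ :=
      (hr.integrable.sub hs.integrable).abs.const_mul C
    rw [← integral_const_mul, ← Real.norm_eq_abs]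
    refine norm_integral_le_of_norm_le hrs (.of_forall fun y => ?_)
    rw [norm_mul]
    exact mul_le_mul_of_nonneg_right (hgC y) (abs_nonneg _)
  rw [h_split]
  exact (abs_add_le _ _).trans (add_le_add (hr.abs_integral_mul_le hfg) h_density)

theorem comp_snd [SFinite μ] (hr : IsProbDensity μ r) (ν : Measure X) [IsProbabilityMeasure ν] :
    IsProbDensity (ν.prod μ) fun z => r z.2 where
  nonneg := Measure.quasiMeasurePreserving_snd.ae hr.nonneg
  integral_eq_one := by simp [integral_fun_snd, hr.integral_eq_one]

theorem integral_integral_mul [SFinite μ] (hr : IsProbDensity μ r) (ν : Measure X)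
    [IsProbabilityMeasure ν] {F : X × Y → ℝ} (hF : Measurable F) (hFC : ∀ z, |F z| ≤ C) :
    ∫ x, ∫ y, F (x, y) * r y ∂μ ∂ν = ∫ z, F z * r z.2 ∂ν.prod μ :=
  (integral_prod _ ((hr.comp_snd ν).integrable_mul hF.aestronglyMeasurable hFC)).symm

end IsProbDensity

theorem abs_ciInf_le {ι : Type*} [Nonempty ι] {f : ι → ℝ} {C : ℝ} (hf : ∀ i, |f i| ≤ C) :
    |⨅ i, f i| ≤ C := by
  have hbdd : BddBelow (Set.range f) := ⟨-C, Set.forall_mem_range.2 fun i => (abs_le.1 (hf i)).1⟩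
  obtain ⟨i⟩ := ‹Nonempty ι›
  exact abs_le.2 ⟨le_ciInf fun i => (abs_le.1 (hf i)).1, ciInf_le_of_le hbdd i (abs_le.1 (hf i)).2⟩

theorem abs_ciInf_sub_ciInf_le {ι : Type*} [Nonempty ι] {f g : ι → ℝ} {C : ℝ}
    (hg : BddBelow (Set.range g)) (hfg : ∀ i, |f i - g i| ≤ C) :
    |(⨅ i, f i) - ⨅ i, g i| ≤ C := by
  have hf : BddBelow (Set.range f) := by
    obtain ⟨b, hb⟩ := hg
    exact ⟨b - C, Set.forall_mem_range.2 fun i => by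
      linarith [hb (Set.mem_range_self i), (abs_le.1 (hfg i)).1]⟩
  have h_inf_f_le : (⨅ i, f i) - C ≤ ⨅ i, g i :=
    le_ciInf fun i => by linarith [ciInf_le hf i, (abs_le.1 (hfg i)).2]
  have h_inf_g_le : (⨅ i, g i) - C ≤ ⨅ i, f i :=
    le_ciInf fun i => by linarith [ciInf_le hg i, (abs_le.1 (hfg i)).1]
  exact abs_le.2 ⟨by linarith, by linarith⟩

theorem measurable_finSnoc {Ω : Type*} [MeasurableSpace Ω] {n : ℕ} {Z : Fin (n + 1) → Type*}
    [∀ i, MeasurableSpace (Z i)] {f : Ω → ∀ i : Fin n, Z i.castSucc} {g : Ω → Z (Fin.last n)}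
    (hf : Measurable f) (hg : Measurable g) :
    Measurable fun ω => (Fin.snoc (f ω) (g ω) : ∀ i, Z i) := by
  refine measurable_pi_lambda _ fun i => ?_
  cases i using Fin.lastCases with
  | last => simpa only [Fin.snoc_last] using hg
  | cast i => simpa only [Fin.snoc_castSucc] using measurable_pi_iff.1 hf i

section LowerExpectation

variable {X Y A : Type*} [MeasurableSpace X] [MeasurableSpace Y]

/-- The lowest expectation of `f` over the laws `ν ⊗ (r a · μ)`, `a : A`, on `X × Y`: the one-step
Bellman operator of the backward recursion. -/
noncomputable def lowerExpectation (ν : Measure X) (μ : Measure Y) (r : A → Y → ℝ)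
    (f : X × Y → ℝ) : ℝ :=
  ⨅ a, ∫ x, ∫ y, f (x, y) * r a y ∂μ ∂ν

variable [Nonempty A] {ν : Measure X} [IsProbabilityMeasure ν] {μ : Measure Y} [SFinite μ]
  {r s : A → Y → ℝ} {f g : X × Y → ℝ} {C D ε : ℝ}

theorem abs_lowerExpectation_le (hr : ∀ a, IsProbDensity μ (r a)) (hf : Measurable f)
    (hfC : ∀ z, |f z| ≤ C) : |lowerExpectation ν μ r f| ≤ C := by
  refine abs_ciInf_le fun a => ?_
  rw [(hr a).integral_integral_mul ν hf hfC]
  exact ((hr a).comp_snd ν).abs_integral_mul_le hfC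

theorem abs_lowerExpectation_sub_le (hr : ∀ a, IsProbDensity μ (r a))
    (hs : ∀ a, IsProbDensity μ (s a)) (hrs : ∀ a, ∫ y, |r a y - s a y| ∂μ ≤ ε)
    (hf : Measurable f) (hg : Measurable g) (hgC : ∀ z, |g z| ≤ C)
    (hfg : ∀ z, |f z - g z| ≤ D) :
    |lowerExpectation ν μ r f - lowerExpectation ν μ s g| ≤ D + C * ε := by
  have hg_abs_le (a : A) : |∫ x, ∫ y, g (x, y) * s a y ∂μ ∂ν| ≤ C := by
    rw [(hs a).integral_integral_mul ν hg hgC]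
    exact ((hs a).comp_snd ν).abs_integral_mul_le hgC
  have hfC : ∀ z, |f z| ≤ D + C := fun z => by
    simpa only [sub_add_cancel] using (abs_add_le _ _).trans (add_le_add (hfg z) (hgC z))
  refine abs_ciInf_sub_ciInf_le
    ⟨-C, Set.forall_mem_range.2 fun a => (abs_le.1 (hg_abs_le a)).1⟩ fun a => ?_
  have hC : 0 ≤ C := (abs_nonneg _).trans (hg_abs_le a)
  have hrs_prod : ∫ z, |r a z.2 - s a z.2| ∂ν.prod μ = ∫ y, |r a y - s a y| ∂μ := by
    simpa using integral_fun_snd (μ := ν) (ν := μ) fun y => |r a y - s a y|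
  calc |∫ x, ∫ y, f (x, y) * r a y ∂μ ∂ν - ∫ x, ∫ y, g (x, y) * s a y ∂μ ∂ν|
      = |∫ z, f z * r a z.2 ∂ν.prod μ - ∫ z, g z * s a z.2 ∂ν.prod μ| := by
        rw [(hr a).integral_integral_mul ν hf hfC, (hs a).integral_integral_mul ν hg hgC]
    _ ≤ D + C * ∫ z, |r a z.2 - s a z.2| ∂ν.prod μ :=
        ((hr a).comp_snd ν).abs_integral_mul_sub_integral_mul_le ((hs a).comp_snd ν)
          hf.aestronglyMeasurable hg.aestronglyMeasurable hgC hfg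
    _ ≤ D + C * ε := by
        rw [hrs_prod]
        gcongr
        exact hrs a

end LowerExpectation

section BackwardValue

variable {X Y A : Type*} [MeasurableSpace X] [MeasurableSpace Y]

/-- `V 0, …, V m` are measurable functions of the history satisfying the dynamic programming
recursion with transition densities `r`. The terminal condition on `V m` is left free, so that
solutions with different terminal values can be compared. The density leading from step `j` to
`j + 1`, called `r_{j+1}` in the paper, is `r j`. -/
structure IsBackwardValue (ν : Measure X) (μ : Measure Y) (m : ℕ)
    (r : (j : ℕ) → A → Y → (Fin j → X × Y) → ℝ) (V : (j : ℕ) → (Fin j → X × Y) → ℝ) :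
    Prop where
  measurable : ∀ j ≤ m, Measurable (V j)
  recursion : ∀ j < m, ∀ o,
    V j o = lowerExpectation ν μ (fun a y => r j a y o) fun z => V (j + 1) (Fin.snoc o z)

namespace IsBackwardValue

variable {ν : Measure X} {μ : Measure Y} {m : ℕ}
  {r s : (j : ℕ) → A → Y → (Fin j → X × Y) → ℝ} {V W : (j : ℕ) → (Fin j → X × Y) → ℝ}

theorem measurable_snoc (hV : IsBackwardValue ν μ m r V) {j : ℕ} (hj : j < m)
    (o : Fin j → X × Y) : Measurable fun z => V (j + 1) (Fin.snoc o z) :=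
  (hV.measurable (j + 1) hj).comp (measurable_finSnoc measurable_const measurable_id)

variable [Nonempty A] [IsProbabilityMeasure ν] [SFinite μ] {B δ : ℝ} {ε : ℕ → ℝ}

theorem abs_le (hV : IsBackwardValue ν μ m r V)
    (hr : ∀ j < m, ∀ o a, IsProbDensity μ fun y => r j a y o) (hVm : ∀ o, |V m o| ≤ B)
    {j : ℕ} (hj : j ≤ m) : ∀ o, |V j o| ≤ B := by
  induction hj using Nat.decreasingInduction with
  | self => exact hVm
  | of_succ j hj ih =>
    intro o
    rw [hV.recursion j hj o]
    exact abs_lowerExpectation_le (hr j hj o) (hV.measurable_snoc hj o) fun z => ih _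

theorem abs_sub_le (hV : IsBackwardValue ν μ m r V) (hW : IsBackwardValue ν μ m s W)
    (hr : ∀ j < m, ∀ o a, IsProbDensity μ fun y => r j a y o)
    (hs : ∀ j < m, ∀ o a, IsProbDensity μ fun y => s j a y o)
    (hrs : ∀ j < m, ∀ o a, ∫ y, |r j a y o - s j a y o| ∂μ ≤ ε j)
    (hWm : ∀ o, |W m o| ≤ B) (hVWm : ∀ o, |V m o - W m o| ≤ δ) {j : ℕ} (hj : j ≤ m) :
    ∀ o, |V j o - W j o| ≤ δ + B * ∑ i ∈ Finset.Ico j m, ε i := by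
  induction hj using Nat.decreasingInduction with
  | self => simpa using hVWm
  | of_succ j hj ih =>
    intro o
    rw [hV.recursion j hj o, hW.recursion j hj o]
    calc _ ≤ (δ + B * ∑ i ∈ Finset.Ico (j + 1) m, ε i) + B * ε j :=
          abs_lowerExpectation_sub_le (hr j hj o) (hs j hj o) (hrs j hj o)
            (hV.measurable_snoc hj o) (hW.measurable_snoc hj o)
            (fun z => hW.abs_le hs hWm hj _) fun z => ih _
      _ = δ + B * ∑ i ∈ Finset.Ico j m, ε i := by
          rw [Finset.sum_eq_sum_Ico_succ_bot hj]
          ring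

end IsBackwardValue

end BackwardValue

theorem stmt_14_general
    {X : Type*} [MeasurableSpace X] (ν : Measure X) [IsProbabilityMeasure ν]
    {Y : Type*} [MeasurableSpace Y] (μ : Measure Y) [SFinite μ]
    {𝔸 : Type*} [Nonempty 𝔸] (m : ℕ) {P : Type*} [PseudoMetricSpace P] (Θ : Set P) (L B : ℝ)
    (rker : P → (j : ℕ) → 𝔸 → Y → (Fin j → X × Y) → ℝ)
    (hrnn : ∀ θ ∈ Θ, ∀ j a y o, 0 ≤ rker θ j a y o)
    (hrint : ∀ θ ∈ Θ, ∀ j a o, ∫ y, rker θ j a y o ∂μ = 1)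
    (hrlip : ∀ θ ∈ Θ, ∀ θ' ∈ Θ, ∀ j a o,
      ∫ y, |rker θ j a y o - rker θ' j a y o| ∂μ ≤ L * dist θ θ')
    (Vm : (Fin m → X × Y) → ℝ) (hVmbd : ∀ o, |Vm o| ≤ B)
    (V : P → (j : ℕ) → (Fin j → X × Y) → ℝ)
    (hVmeas : ∀ θ ∈ Θ, ∀ j, Measurable (V θ j))
    (hVtop : ∀ θ ∈ Θ, ∀ o, V θ m o = Vm o)
    (hVrec : ∀ θ ∈ Θ, ∀ j < m, ∀ o,
      V θ j o = ⨅ a, ∫ x, ∫ y, V θ (j + 1) (Fin.snoc o (x, y)) * rker θ j a y o ∂μ ∂ν) :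
    (∀ θ ∈ Θ, ∀ j ≤ m, ∀ o, |V θ j o| ≤ B) ∧
    ∀ θ ∈ Θ, ∀ θ' ∈ Θ, ∀ j ≤ m, ∀ o,
      |V θ j o - V θ' j o| ≤ ((m : ℝ) - j) * B * L * dist θ θ' := by
  have hdens : ∀ θ ∈ Θ, ∀ j < m, ∀ o a, IsProbDensity μ fun y => rker θ j a y o :=
    fun θ hθ j _ o a => ⟨.of_forall fun y => hrnn θ hθ j a y o, hrint θ hθ j a o⟩
  have hV : ∀ θ ∈ Θ, IsBackwardValue ν μ m (rker θ) (V θ) :=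
    fun θ hθ => ⟨fun j _ => hVmeas θ hθ j, hVrec θ hθ⟩
  have hVm : ∀ θ ∈ Θ, ∀ o, |V θ m o| ≤ B := fun θ hθ o => hVtop θ hθ o ▸ hVmbd o
  refine ⟨fun θ hθ j hj => (hV θ hθ).abs_le (hdens θ hθ) (hVm θ hθ) hj,
    fun θ hθ θ' hθ' j hj o => ?_⟩
  have hVm_eq : ∀ o, |V θ m o - V θ' m o| ≤ 0 := by simp [hVtop θ hθ, hVtop θ' hθ']
  calc |V θ j o - V θ' j o| ≤ 0 + B * ∑ _i ∈ Finset.Ico j m, L * dist θ θ' :=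
        (hV θ hθ).abs_sub_le (hV θ' hθ') (hdens θ hθ) (hdens θ' hθ')
          (fun j _ o a => hrlip θ hθ θ' hθ' j a o) (hVm θ' hθ') hVm_eq hj o
    _ = ((m : ℝ) - j) * B * L * dist θ θ' := by
        rw [Finset.sum_const, Nat.card_Ico, nsmul_eq_mul, Nat.cast_sub hj]
        ring

/-- Proposition `LipvaluePAR` of the paper (abstract form): backward dynamic programming
value functions `V_j^θ` built from parameterized importance-sampling weights `r_{j+1}^θ`
(probability densities w.r.t. `μ`, with `∫|r^θ − r^{θ'}| dμ ≤ L·|θ−θ'|`) from a bounded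
terminal condition `|V_m| ≤ B` satisfy `|V_j^θ| ≤ B` and
`|V_j^θ(o) − V_j^{θ'}(o)| ≤ (m−j)·B·L·|θ−θ'|` for all histories `o` and `θ, θ' ∈ Θ`. -/
theorem stmt_14
    {X : Type*} [MeasurableSpace X] (ν : Measure X) [IsProbabilityMeasure ν]
    {q p : ℕ} (μ : Measure (Fin q → ℝ)) [IsProbabilityMeasure μ]
    {𝔸 : Type*} [MetricSpace 𝔸] [CompactSpace 𝔸] [Nonempty 𝔸]
    (m : ℕ) (Θ : Set (EuclideanSpace ℝ (Fin p))) (hΘ : Θ.Nonempty)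
    (L B : ℝ)
    (rker : EuclideanSpace ℝ (Fin p) → (j : ℕ) → 𝔸 → (Fin q → ℝ) →
      (Fin j → X × (Fin q → ℝ)) → ℝ)
    (hrmeas : ∀ θ ∈ Θ, ∀ (j : ℕ) (a : 𝔸) (o : Fin j → X × (Fin q → ℝ)),
      Measurable fun y => rker θ j a y o)
    (hrcont : ∀ θ ∈ Θ, ∀ (j : ℕ) (y : Fin q → ℝ) (o : Fin j → X × (Fin q → ℝ)),
      Continuous fun a : 𝔸 => rker θ j a y o)
    (hrnn : ∀ θ ∈ Θ, ∀ (j : ℕ) (a : 𝔸) (y : Fin q → ℝ) (o : Fin j → X × (Fin q → ℝ)),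
      0 ≤ rker θ j a y o)
    (hrint : ∀ θ ∈ Θ, ∀ (j : ℕ) (a : 𝔸) (o : Fin j → X × (Fin q → ℝ)),
      ∫ y, rker θ j a y o ∂μ = 1)
    (hrlip : ∀ θ ∈ Θ, ∀ θ' ∈ Θ, ∀ (j : ℕ) (a : 𝔸) (o : Fin j → X × (Fin q → ℝ)),
      ∫ y, |rker θ j a y o - rker θ' j a y o| ∂μ ≤ L * ‖θ - θ'‖)
    (Vm : (Fin m → X × (Fin q → ℝ)) → ℝ) (hVmmeas : Measurable Vm)
    (hVmbd : ∀ o, |Vm o| ≤ B)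
    (V : EuclideanSpace ℝ (Fin p) → (j : ℕ) → (Fin j → X × (Fin q → ℝ)) → ℝ)
    (hVmeas : ∀ θ ∈ Θ, ∀ j : ℕ, Measurable (V θ j))
    (hVtop : ∀ θ ∈ Θ, ∀ o, V θ m o = Vm o)
    (hVrec : ∀ θ ∈ Θ, ∀ j < m, ∀ o : Fin j → X × (Fin q → ℝ),
      V θ j o = ⨅ a : 𝔸, ∫ x, ∫ y, V θ (j + 1) (Fin.snoc o (x, y)) * rker θ j a y o ∂μ ∂ν) :
    (∀ θ ∈ Θ, ∀ j ≤ m, ∀ o : Fin j → X × (Fin q → ℝ), |V θ j o| ≤ B) ∧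
    ∀ θ ∈ Θ, ∀ θ' ∈ Θ, ∀ j ≤ m, ∀ o : Fin j → X × (Fin q → ℝ),
      |V θ j o - V θ' j o| ≤ ((m : ℝ) - j) * B * L * ‖θ - θ'‖ := by
  simpa only [dist_eq_norm] using stmt_14_general ν μ m Θ L B rker hrnn hrint
    (by simpa only [dist_eq_norm] using hrlip) Vm hVmbd V hVmeas hVtop hVrec
end
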